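/- Let n ≥ 3 and let Ψ be an automorphism of the left-ideal relation digraph of M_n(F_q). Then there exists a single invertible matrix P ∈ M_n(F_q) such that [Ψ(E_{e_k})·P] = [E_{e_k}] simultaneously for every k with 1 ≤ k ≤ n. -/

import Mathlib

/-- The left ideal of `M_n(F)` generated by `X`: the set of all `C * X`. -/
def leftIdeal {n : ℕ} {F : Type*} [Field F]
    (X : Matrix (Fin n) (Fin n) F) : Set (Matrix (Fin n) (Fin n) F) :=
  {A | ∃ C : Matrix (Fin n) (Fin n) F, A = C * X}

/-- `Ee k` is the matrix whose first row is the `k`-th standard basis vector of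
`F^n` and whose other rows are zero. -/
def Ee {n : ℕ} (F : Type*) [Field F] (k : Fin n) : Matrix (Fin n) (Fin n) F :=
  Matrix.of fun i j => if (i : ℕ) = 0 ∧ j = k then 1 else 0

/-!
The left ideal `[X]` consists of the matrices whose row space lies in the row space of `X`, and
every subspace of `F^n` is a row space. Lifting chains of subspaces below `rowSpace (Ψ X)` along `Ψ`
shows `rank (Ψ X) ≤ rank X`, so each `Ψ (E_{e_k})` has row space of dimension at most one.
These row spaces together span `F^n`: a hyperplane `H = rowSpace (Ψ Y)` containing them all would
contain each of them strictly because `n ≥ 3`, so `rowSpace Y` would contain every `e_k`, hence be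
maximal, although `H` is not. Generators of the `n` row spaces thus form a basis, and `P` is the
change of basis taking it to the standard one.
-/

section StrictOrder

open Order

theorem height_le_height_of_surjective_of_lt_imp_lt {α β γ : Type*} [Preorder β] [Preorder γ]
    {f : α → β} {g : α → γ} (hf : Function.Surjective f)
    (hfg : ∀ x y, f x < f y → g x < g y) (x : α) : height (f x) ≤ height (g x) := by
  classical
  let s : β → α := Function.update (Function.surjInv hf) (f x) x
  have hs : ∀ b, f (s b) = b := by
    intro b
    by_cases hb : b = f x
    · simp [s, hb]
    · simp [s, hb, Function.surjInv_eq hf]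
  have hmono : StrictMono (g ∘ s) := fun b c hbc => hfg _ _ (by simpa only [hs] using hbc)
  simpa [s] using height_le_height_apply_of_strictMono (g ∘ s) hmono (f x)

theorem iSup_eq_top_of_surjective_of_lt_imp_lt {α β γ : Type*} {ι : Sort*} [CompleteLattice β]
    [IsCoatomic β] [CompleteLattice γ] {f : α → β} {g : α → γ} (hf : Function.Surjective f)
    (hfg : ∀ x y, f x < f y → g x < g y) {x : ι → α} (hx : ∀ i, ¬IsCoatom (f (x i)))
    (hg : ⨆ i, g (x i) = ⊤) : ⨆ i, f (x i) = ⊤ := by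
  refine (eq_top_or_exists_le_coatom _).resolve_right ?_
  rintro ⟨H, hH, hle⟩
  obtain ⟨y, rfl⟩ := hf H
  obtain ⟨z, hz⟩ := hf ⊤
  have hlt : ∀ i, f (x i) < f y := fun i =>
    ((le_iSup _ i).trans hle).lt_of_ne fun h => hx i (h ▸ hH)
  have hy : g y = ⊤ := top_le_iff.mp (hg ▸ iSup_le fun i => (hfg _ _ (hlt i)).le)
  exact not_top_lt (hy ▸ hfg y z (hz ▸ hH.lt_top))

end StrictOrder

section Subspaces

open Module

variable {K V : Type*} [DivisionRing K] [AddCommGroup V] [Module K V] [FiniteDimensional K V]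

theorem finrank_le_finrank_of_surjective_of_lt_imp_lt {α : Type*} {f g : α → Submodule K V}
    (hf : Function.Surjective f) (hfg : ∀ x y, f x < f y → g x < g y) (x : α) :
    finrank K (f x) ≤ finrank K (g x) := by
  have h := height_le_height_of_surjective_of_lt_imp_lt hf hfg x
  rw [← Module.length_submodule, ← Module.length_submodule, Module.length_eq_finrank,
    Module.length_eq_finrank] at h
  exact_mod_cast h

theorem finrank_add_one_eq_of_isCoatom {H : Submodule K V} (hH : IsCoatom H) :
    finrank K H + 1 = finrank K V := by
  obtain ⟨L, hL⟩ := exists_isCompl H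
  rw [← Submodule.finrank_add_eq_of_isCompl hL,
    Submodule.isAtom_iff_finrank_eq_one.mp (hL.isCoatom_iff_isAtom.mp hH)]

theorem exists_basis_span_singleton_eq {ι : Type*} [Fintype ι] {L : ι → Submodule K V}
    (hL : ∀ i, finrank K (L i) ≤ 1) (htop : ⨆ i, L i = ⊤) (hcard : Fintype.card ι = finrank K V) :
    ∃ b : Basis ι K V, ∀ i, L i = K ∙ b i := by
  choose w hw using fun i => ((L i).finrank_le_one_iff_isPrincipal.mp (hL i)).principal
  have hspan : Submodule.span K (Set.range w) = ⊤ := by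
    rw [Submodule.span_range_eq_iSup, ← htop]
    exact iSup_congr fun i => (hw i).symm
  exact ⟨basisOfTopLeSpanOfCardEqFinrank w hspan.ge hcard, by simpa using hw⟩

end Subspaces

section RowSpace

open Matrix

variable {l m n R : Type*} [Fintype m] [Semiring R]

/-- The row space of a matrix, as the set of all `v ᵥ* X`; this is the invariant that determines
the left ideal generated by `X`. -/
def rowSpace (X : Matrix m n R) : Submodule R (n → R) :=
  LinearMap.range X.vecMulLinear

theorem rowSpace_eq_span_rows (X : Matrix m n R) :
    rowSpace X = Submodule.span R (Set.range X.row) :=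
  range_vecMulLinear X

theorem rowSpace_le_rowSpace_iff [Fintype l] {X : Matrix l n R} {Y : Matrix m n R} :
    rowSpace X ≤ rowSpace Y ↔ ∃ C, X = C * Y := by
  rw [rowSpace_eq_span_rows X, Submodule.span_le, Set.range_subset_iff]
  constructor
  · intro h
    choose C hC using h
    exact ⟨Matrix.of C, funext fun i => (hC i).symm⟩
  · rintro ⟨C, rfl⟩ i
    exact ⟨C i, rfl⟩

theorem rowSpace_mul [Fintype n] (X : Matrix m n R) (P : Matrix n l R) :
    rowSpace (X * P) = (rowSpace X).map P.vecMulLinear := by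
  classical
  rw [rowSpace, rowSpace, ← LinearMap.range_comp]
  exact congrArg LinearMap.range (toLinearMapRight'_mul X P)

theorem rowSpace_single [DecidableEq m] [DecidableEq n] (i : m) (k : n) :
    rowSpace (Matrix.single i k (1 : R)) = R ∙ Pi.single k (1 : R) := by
  ext w
  simp only [rowSpace, LinearMap.mem_range, vecMulLinear_apply, single_eq_single_vecMulVec_single,
    vecMul_vecMulVec, dotProduct_single_one, Submodule.mem_span_singleton]
  exact ⟨fun ⟨v, hv⟩ => ⟨v i, hv⟩, fun ⟨a, ha⟩ => ⟨fun _ => a, ha⟩⟩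

theorem rowSpace_surjective {K : Type*} [DivisionRing K] :
    Function.Surjective (rowSpace : Matrix m m K → Submodule K (m → K)) := by
  classical
  intro V
  obtain ⟨W, hVW⟩ := exists_isCompl V
  refine ⟨LinearMap.toMatrixRight' (V.projection W hVW), ?_⟩
  calc
    rowSpace _ = LinearMap.range (V.projection W hVW) :=
      congrArg LinearMap.range (LinearMap.toMatrixRight'.symm_apply_apply _)
    _ = V := Submodule.range_projection hVW

theorem exists_isUnit_basis_vecMul_eq_single [DecidableEq m] (b : Module.Basis m R (m → R)) :
    ∃ P : Matrix m m R, IsUnit P ∧ ∀ k, b k ᵥ* P = Pi.single k 1 := by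
  let P := LinearMap.toMatrixRight' b.equivFun.toLinearMap
  let Q := LinearMap.toMatrixRight' b.equivFun.symm.toLinearMap
  have hPQ : P * Q = 1 := by simp [P, Q, ← LinearMap.toMatrixRight'_comp]
  have hQP : Q * P = 1 := by simp [P, Q, ← LinearMap.toMatrixRight'_comp]
  refine ⟨P, ⟨⟨P, Q, hPQ, hQP⟩, rfl⟩, fun k => ?_⟩
  calc
    b k ᵥ* P = b.equivFun (b k) :=
      LinearMap.congr_fun (LinearMap.toMatrixRight'.symm_apply_apply b.equivFun.toLinearMap) (b k)
    _ = Pi.single k 1 := by ext j; simp [Pi.single_apply, eq_comm]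

end RowSpace

section LeftIdeal

open Matrix

variable {n : ℕ} {F : Type*} [Field F]

theorem mem_leftIdeal_iff_rowSpace_le {A X : Matrix (Fin n) (Fin n) F} :
    A ∈ leftIdeal X ↔ rowSpace A ≤ rowSpace X :=
  rowSpace_le_rowSpace_iff.symm

theorem leftIdeal_subset_iff {X Y : Matrix (Fin n) (Fin n) F} :
    leftIdeal X ⊆ leftIdeal Y ↔ rowSpace X ≤ rowSpace Y :=
  ⟨fun h => mem_leftIdeal_iff_rowSpace_le.mp (h (mem_leftIdeal_iff_rowSpace_le.mpr le_rfl)),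
    fun h _ hA => mem_leftIdeal_iff_rowSpace_le.mpr ((mem_leftIdeal_iff_rowSpace_le.mp hA).trans h)⟩

theorem leftIdeal_ssubset_iff {X Y : Matrix (Fin n) (Fin n) F} :
    leftIdeal X ⊂ leftIdeal Y ↔ rowSpace X < rowSpace Y := by
  rw [ssubset_iff_subset_not_subset, lt_iff_le_not_ge, leftIdeal_subset_iff, leftIdeal_subset_iff]

theorem leftIdeal_eq_iff {X Y : Matrix (Fin n) (Fin n) F} :
    leftIdeal X = leftIdeal Y ↔ rowSpace X = rowSpace Y := by
  rw [Set.Subset.antisymm_iff, le_antisymm_iff, leftIdeal_subset_iff, leftIdeal_subset_iff]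

theorem rowSpace_Ee (k : Fin n) : rowSpace (Ee F k) = F ∙ Pi.single k (1 : F) := by
  have : NeZero n := ⟨k.pos.ne'⟩
  have hEe : Ee F k = Matrix.single 0 k 1 := by
    ext i j
    simp only [Ee, Matrix.of_apply, Matrix.single_apply, Fin.val_eq_zero_iff, eq_comm]
  rw [hEe, rowSpace_single]

theorem iSup_rowSpace_Ee : ⨆ k, rowSpace (Ee F k) = (⊤ : Submodule F (Fin n → F)) := by
  simpa only [rowSpace_Ee, Submodule.span_range_eq_iSup, Pi.basisFun_apply]
    using (Pi.basisFun F (Fin n)).span_eq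

end LeftIdeal

theorem stmt_14_general {n : ℕ} (hn : 3 ≤ n) {F : Type*} [Field F]
    (Ψ : Matrix (Fin n) (Fin n) F → Matrix (Fin n) (Fin n) F)
    (hsurj : Function.Surjective Ψ)
    (hedge : ∀ X Y : Matrix (Fin n) (Fin n) F,
      leftIdeal (Ψ X) ⊂ leftIdeal (Ψ Y) → leftIdeal X ⊂ leftIdeal Y) :
    ∃ P : Matrix (Fin n) (Fin n) F, IsUnit P ∧
      ∀ k : Fin n, leftIdeal (Ψ (Ee F k) * P) = leftIdeal (Ee F k) := by
  simp only [leftIdeal_ssubset_iff] at hedge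
  have hrow : Function.Surjective fun X => rowSpace (Ψ X) := rowSpace_surjective.comp hsurj
  have hdim : ∀ k, Module.finrank F (rowSpace (Ψ (Ee F k))) ≤ 1 := fun k =>
    (finrank_le_finrank_of_surjective_of_lt_imp_lt hrow hedge (Ee F k)).trans
      (by rw [rowSpace_Ee, finrank_span_singleton (by simp)])
  have hcoatom : ∀ k, ¬IsCoatom (rowSpace (Ψ (Ee F k))) := by
    intro k hk
    have hfinrank := finrank_add_one_eq_of_isCoatom hk
    rw [Module.finrank_fin_fun] at hfinrank
    have := hdim k
    lia
  have htop : ⨆ k, rowSpace (Ψ (Ee F k)) = ⊤ :=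
    iSup_eq_top_of_surjective_of_lt_imp_lt hrow hedge hcoatom iSup_rowSpace_Ee
  obtain ⟨b, hb⟩ := exists_basis_span_singleton_eq hdim htop (by simp)
  obtain ⟨P, hP, hbP⟩ := exists_isUnit_basis_vecMul_eq_single b
  refine ⟨P, hP, fun k => leftIdeal_eq_iff.mpr ?_⟩
  rw [rowSpace_mul, hb, Submodule.map_span, Set.image_singleton, Matrix.vecMulLinear_apply, hbP,
    rowSpace_Ee]

/-- For any automorphism `Ψ` of the left-ideal relation digraph of `M_n(F_q)`,
`n ≥ 3`, there is one invertible `P` with `[Ψ(E_{e_k}) * P] = [E_{e_k}]` for all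
`1 ≤ k ≤ n`. -/
theorem stmt_14 {n : ℕ} (hn : 3 ≤ n) {F : Type*} [Field F] [Fintype F]
    (Ψ : Matrix (Fin n) (Fin n) F → Matrix (Fin n) (Fin n) F)
    (hbij : Function.Bijective Ψ)
    (hedge : ∀ X Y : Matrix (Fin n) (Fin n) F,
      leftIdeal X ⊂ leftIdeal Y ↔ leftIdeal (Ψ X) ⊂ leftIdeal (Ψ Y)) :
    ∃ P : Matrix (Fin n) (Fin n) F, IsUnit P ∧
      ∀ k : Fin n, leftIdeal (Ψ (Ee F k) * P) = leftIdeal (Ee F k) :=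
  stmt_14_general hn Ψ hbij.surjective fun X Y => (hedge X Y).mpr
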